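/- Let O = F[[t]], K = F((t)), L and M full-rank lattices in K^n, and let L' = t^{-1}W + L where W lifts the subspace W̃ ⊆ L/tL spanned by the images of the tight generators of L with respect to M. If every tight generator of L with respect to M has image in W̃, then c(L', M) = c(L, M) + 1; if some tight generator of L with respect to M has image outside W̃, then c(L', M) = c(L, M). -/

import Mathlib

noncomputable section
open scoped Classical

variable {F : Type*} [Field F] {n : ℕ}

/-- `v` is a basis (over `F[[t]]`) of the full-rank lattice `L` in `K^n`, `K = F((t))`. -/
def IsLatticeBasis (L : Submodule (PowerSeries F) (Fin n → LaurentSeries F))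
    (v : Fin n → Fin n → LaurentSeries F) : Prop :=
  LinearIndependent (LaurentSeries F) v ∧ L = Submodule.span (PowerSeries F) (Set.range v)

/-- `L` is a full-rank `F[[t]]`-lattice in `K^n`. -/
def IsFullLattice (L : Submodule (PowerSeries F) (Fin n → LaurentSeries F)) : Prop :=
  ∃ v, IsLatticeBasis L v

/-- `t^λ` as an element of `K = F((t))`. -/
def tpow (lam : ℤ) : LaurentSeries F := HahnSeries.single lam 1

/-- `val (det L) = d` : the valuation of the determinant of an `O`-basis of `L` is `d`. -/
def HasValDet (L : Submodule (PowerSeries F) (Fin n → LaurentSeries F)) (d : ℤ) : Prop :=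
  ∃ v, IsLatticeBasis L v ∧ (Matrix.of v).det.order = d

/-- `w` is a generator of `L`: it belongs to some `O`-basis of `L`. -/
def IsGen (L : Submodule (PowerSeries F) (Fin n → LaurentSeries F))
    (w : Fin n → LaurentSeries F) : Prop :=
  ∃ v i, IsLatticeBasis L v ∧ v i = w

/-- `c(w, M) = lam`, i.e. `lam = min {μ : t^μ • w ∈ M}`. -/
def CVec (w : Fin n → LaurentSeries F) (M : Submodule (PowerSeries F) (Fin n → LaurentSeries F))
    (lam : ℤ) : Prop :=
  IsLeast {μ : ℤ | (tpow μ : LaurentSeries F) • w ∈ M} lam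

/-- `c(L, M) = c`, i.e. `c` is the minimum of `c(w,M)` over generators `w` of `L`. -/
def CLat (L M : Submodule (PowerSeries F) (Fin n → LaurentSeries F)) (c : ℤ) : Prop :=
  IsLeast {μ : ℤ | ∃ w, IsGen L w ∧ CVec w M μ} c

/-- `A(L_1, ..., L_n) = a` : the minimum of `val (det (v_1, ..., v_n))` over `v_i ∈ L_i`. -/
def AIs (Ls : Fin n → Submodule (PowerSeries F) (Fin n → LaurentSeries F)) (a : ℤ) : Prop :=
  IsLeast {d : ℤ | ∃ v : Fin n → Fin n → LaurentSeries F,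
    (∀ i, v i ∈ Ls i) ∧ (Matrix.of v).det ≠ 0 ∧ (Matrix.of v).det.order = d} a

/-- `x` lies in `t • L`. -/
def MemTL (L : Submodule (PowerSeries F) (Fin n → LaurentSeries F))
    (x : Fin n → LaurentSeries F) : Prop :=
  ∃ y ∈ L, x = (PowerSeries.X : PowerSeries F) • y

end

/-!
A vector `w` is a generator of `L` exactly when `w ∈ L` and `t⁻¹ w ∉ L`. Hence, for any lattice `L'`
with `L ≤ L' ≤ t⁻¹ L`, the generators of `L'` are the generators `w` of `L` with `t⁻¹ w ∉ L'`,
together with the vectors `t⁻¹ w ∈ L'` for `w` a generator of `L`. Since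
`c(t⁻¹ w, M) = c(w, M) + 1`, the minimum stays the same if some tight `w` has `t⁻¹ w ∉ L'` and grows
by one otherwise. For `L' = t⁻¹ W + L`, the condition `t⁻¹ w ∈ L'` says that `w ∈ W + t L`.
-/

open PowerSeries LaurentSeries
open scoped Pointwise

theorem smul_span_range {α R V ι : Type*} [Monoid α] [Semiring R] [AddCommMonoid V] [Module R V]
    [DistribMulAction α V] [SMulCommClass α R V] (r : α) (v : ι → V) :
    r • Submodule.span R (Set.range v) = Submodule.span R (Set.range fun i ↦ r • v i) := by
  rw [Submodule.smul_span, Set.smul_set_range]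

theorem span_range_update_sum_smul {R V ι : Type*} [Ring R] [AddCommGroup V] [Module R V]
    [Fintype ι] [DecidableEq ι] {v : ι → V} {a : ι → R} {i : ι} (ha : IsUnit (a i)) :
    Submodule.span R (Set.range (Function.update v i (∑ j, a j • v j))) =
      Submodule.span R (Set.range v) := by
  set w := ∑ j, a j • v j
  set S := Submodule.span R (Set.range (Function.update v i w))
  have mem_of_ne (j : ι) (hj : j ≠ i) : v j ∈ S := Submodule.subset_span ⟨j, by simp [hj]⟩
  have self_mem : v i ∈ S := by
    have hsub : a i • v i = w - ∑ j ∈ Finset.univ.erase i, a j • v j :=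
      eq_sub_of_add_eq (Finset.add_sum_erase _ (fun j ↦ a j • v j) (Finset.mem_univ i))
    rw [← S.smul_mem_iff_of_isUnit ha, hsub]
    exact S.sub_mem (Submodule.subset_span ⟨i, by simp⟩)
      (S.sum_mem fun j hj ↦ S.smul_mem _ (mem_of_ne j (Finset.ne_of_mem_erase hj)))
  apply le_antisymm <;> rw [Submodule.span_le, Set.range_subset_iff] <;> intro j <;>
    obtain rfl | hj := eq_or_ne j i
  · simpa using (Submodule.mem_span_range_iff_exists_fun R).mpr ⟨a, rfl⟩
  · simpa [hj] using Submodule.subset_span (Set.mem_range_self j)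
  · exact self_mem
  · exact mem_of_ne j hj

section SpanRange

variable {R V ι : Type*} [CommRing R] [AddCommGroup V] [Module R V] {v : ι → V} {c : R}

theorem isUnit_of_mem_smul_span_range {i : ι} (hv : LinearIndependent R v)
    (h : v i ∈ c • Submodule.span R (Set.range v)) : IsUnit c := by
  obtain ⟨y, hy, hcy⟩ := (Submodule.mem_smul_pointwise_iff_exists _ _ _).mp h
  obtain ⟨b, rfl⟩ := Finsupp.mem_span_range_iff_exists_finsupp.mp hy
  have hcoeff : c • b = Finsupp.single i 1 := hv <| by
    rw [map_smul, Finsupp.linearCombination_single, one_smul, ← hcy,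
      Finsupp.linearCombination_apply]
  exact .of_mul_eq_one (b i) (by simpa using DFunLike.congr_fun hcoeff i)

theorem sum_smul_mem_smul_span_range [Fintype ι] {a : ι → R} (h : ∀ j, c ∣ a j) :
    ∑ j, a j • v j ∈ c • Submodule.span R (Set.range v) := by
  choose b hb using h
  simp only [hb, mul_smul, ← Finset.smul_sum]
  exact Submodule.smul_mem_pointwise_smul _ _ _
    ((Submodule.mem_span_range_iff_exists_fun R).mpr ⟨b, rfl⟩)

end SpanRange

theorem mem_span_range_sup_X_smul_iff {R V ι : Type*} [CommRing R] [AddCommGroup V] [Module R⟦X⟧ V]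
    [Fintype ι] {L : Submodule R⟦X⟧ V} {u : ι → V} (hu : ∀ i, u i ∈ L) {x : V} :
    x ∈ Submodule.span R⟦X⟧ (Set.range u) ⊔ (X : R⟦X⟧) • L ↔
      ∃ a : ι → R, x - ∑ i, (C (a i) : R⟦X⟧) • u i ∈ (X : R⟦X⟧) • L := by
  have hspan : Submodule.span R⟦X⟧ (Set.range u) ≤ L :=
    Submodule.span_le.mpr (Set.range_subset_iff.mpr hu)
  rw [Submodule.mem_sup]
  constructor
  · rintro ⟨y, hy, z, hz, rfl⟩
    obtain ⟨b, rfl⟩ := (Submodule.mem_span_range_iff_exists_fun _).mp hy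
    refine ⟨fun i ↦ constantCoeff (b i), ?_⟩
    have hdvd (i : ι) : (X : R⟦X⟧) ∣ b i - C (constantCoeff (b i)) :=
      X_dvd_iff.mpr (by simp)
    rw [add_sub_right_comm, ← Finset.sum_sub_distrib]
    simp only [← sub_smul]
    exact add_mem (smul_mono_right X hspan (sum_smul_mem_smul_span_range hdvd)) hz
  · rintro ⟨a, ha⟩
    exact ⟨_, (Submodule.mem_span_range_iff_exists_fun _).mpr ⟨_, rfl⟩, _, ha, add_sub_cancel _ _⟩

section Uniformizer

variable {F : Type*} [Field F]

theorem tpow_zero : (tpow 0 : F⸨X⸩) = 1 := rfl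

theorem tpow_add (k l : ℤ) : (tpow (k + l) : F⸨X⸩) = tpow k * tpow l := by
  simp [tpow]

theorem tpow_ne_zero (k : ℤ) : (tpow k : F⸨X⸩) ≠ 0 := by
  simp [tpow]

theorem inv_tpow (k : ℤ) : (tpow k : F⸨X⸩)⁻¹ = tpow (-k) :=
  inv_eq_of_mul_eq_one_right (by rw [← tpow_add, add_neg_cancel, tpow_zero])

theorem algebraMap_X_eq_tpow_one : algebraMap F⟦X⟧ F⸨X⸩ X = tpow 1 :=
  HahnSeries.ofPowerSeries_X

variable {V : Type*} [AddCommGroup V] [Module F⸨X⸩ V]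

theorem tpow_smul_tpow_smul (k l : ℤ) (w : V) :
    (tpow k : F⸨X⸩) • (tpow l : F⸨X⸩) • w = (tpow (k + l) : F⸨X⸩) • w := by
  rw [tpow_add, mul_smul]

variable [Module F⟦X⟧ V] [IsScalarTower F⟦X⟧ F⸨X⸩ V] {L W : Submodule F⟦X⟧ V} {w : V}

theorem mem_tpow_smul_iff {k : ℤ} :
    w ∈ (tpow k : F⸨X⸩) • L ↔ (tpow (-k) : F⸨X⸩) • w ∈ L := by
  rw [← SetLike.mem_coe, Submodule.coe_pointwise_smul,
    Set.mem_smul_set_iff_inv_smul_mem₀ (tpow_ne_zero k), inv_tpow, SetLike.mem_coe]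

theorem X_smul_eq_tpow_one_smul : (X : F⟦X⟧) • L = (tpow 1 : F⸨X⸩) • L := by
  ext w
  simp only [Submodule.mem_smul_pointwise_iff_exists, ← algebraMap_X_eq_tpow_one, algebraMap_smul]

theorem mem_X_smul_iff : w ∈ (X : F⟦X⟧) • L ↔ (tpow (-1) : F⸨X⸩) • w ∈ L := by
  rw [X_smul_eq_tpow_one_smul, mem_tpow_smul_iff]

theorem mem_sup_X_smul_iff :
    w ∈ W ⊔ (X : F⟦X⟧) • L ↔ (tpow (-1) : F⸨X⸩) • w ∈ (tpow (-1) : F⸨X⸩) • W ⊔ L := by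
  have hsup : W ⊔ (X : F⟦X⟧) • L = (tpow 1 : F⸨X⸩) • ((tpow (-1) : F⸨X⸩) • W ⊔ L) := by
    rw [Submodule.smul_sup', smul_smul, ← tpow_add, add_neg_cancel, tpow_zero, one_smul,
      X_smul_eq_tpow_one_smul]
  rw [hsup, mem_tpow_smul_iff]

end Uniformizer

section Lattice

variable {F : Type*} [Field F] {n : ℕ} {L M N P : Submodule F⟦X⟧ (Fin n → F⸨X⸩)}
  {v : Fin n → Fin n → F⸨X⸩} {w : Fin n → F⸨X⸩} {c : ℤ}

theorem memTL_iff : MemTL L w ↔ w ∈ (X : F⟦X⟧) • L := by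
  simp only [MemTL, Submodule.mem_smul_pointwise_iff_exists, eq_comm]

theorem isLatticeBasis_iff :
    IsLatticeBasis L v ↔
      LinearIndependent F⟦X⟧ v ∧ L = Submodule.span F⟦X⟧ (Set.range v) := by
  rw [IsLatticeBasis, LinearIndependent.iff_fractionRing (R := F⟦X⟧) (K := F⸨X⸩)]

theorem isFullLattice_iff_isLattice : IsFullLattice L ↔ Submodule.IsLattice F⸨X⸩ L := by
  constructor
  · rintro ⟨v, hv, rfl⟩
    refine ⟨Submodule.fg_span (Set.finite_range v), ?_⟩
    rw [Submodule.span_span_of_tower]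
    exact hv.span_eq_top_of_card_eq_finrank' (by simp)
  · intro _
    have : Module.Free F⟦X⟧ L := Submodule.IsLattice.free F⸨X⸩ L
    have : Module.Finite F⟦X⟧ L := Submodule.IsLattice.finite F⸨X⸩ L
    let b : Module.Basis (Fin n) F⟦X⟧ L := Module.finBasisOfFinrankEq F⟦X⟧ L
      (by simpa using Submodule.IsLattice.finrank_of_pi (K := F⸨X⸩) L)
    refine ⟨L.subtype ∘ b, isLatticeBasis_iff.mpr
      ⟨b.linearIndependent.map' L.subtype L.ker_subtype, ?_⟩⟩
    rw [Set.range_comp, ← Submodule.map_span, b.span_eq, Submodule.map_subtype_top]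

theorem IsFullLattice.of_le_of_le (hL : IsFullLattice L) (hP : IsFullLattice P) (hLN : L ≤ N)
    (hNP : N ≤ P) : IsFullLattice N := by
  rw [isFullLattice_iff_isLattice] at *
  exact .of_le_of_isLattice_of_fg F⸨X⸩ hLN (hP.fg.of_le hNP)

theorem IsFullLattice.tpow_smul (hL : IsFullLattice L) (k : ℤ) :
    IsFullLattice ((tpow k : F⸨X⸩) • L) := by
  rw [isFullLattice_iff_isLattice] at *
  exact .smul F⸨X⸩ L (Units.mk0 (tpow k) (tpow_ne_zero k))

theorem IsLatticeBasis.update (hv : IsLatticeBasis L v) {a : Fin n → F⟦X⟧} {i : Fin n}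
    (ha : IsUnit (a i)) : IsLatticeBasis L (Function.update v i (∑ j, a j • v j)) := by
  rw [isLatticeBasis_iff] at *
  refine ⟨hv.1.update i _ ⟨1, one_mem _, Finsupp.equivFunOnFinite.symm a, ?_, ?_⟩, ?_⟩
  · exact ha.mem_nonZeroDivisors
  · simp [Finsupp.linearCombination_apply, Finsupp.sum_fintype]
  · rw [span_range_update_sum_smul ha, hv.2]

theorem isGen_iff (hL : IsFullLattice L) :
    IsGen L w ↔ w ∈ L ∧ (tpow (-1) : F⸨X⸩) • w ∉ L := by
  rw [← mem_X_smul_iff]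
  constructor
  · rintro ⟨v, i, hv, rfl⟩
    obtain ⟨hli, rfl⟩ := isLatticeBasis_iff.mp hv
    exact ⟨Submodule.subset_span ⟨i, rfl⟩,
      fun h ↦ X_prime.not_isUnit (isUnit_of_mem_smul_span_range hli h)⟩
  · rintro ⟨hw, hwX⟩
    obtain ⟨v, hv⟩ := hL
    obtain ⟨a, rfl⟩ := (Submodule.mem_span_range_iff_exists_fun _).mp (hv.2 ▸ hw)
    have hunit : ∃ i, IsUnit (a i) := by
      contrapose! hwX
      rw [hv.2]
      exact sum_smul_mem_smul_span_range fun i ↦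
        X_dvd_iff.mpr (by simpa [isUnit_iff_constantCoeff] using hwX i)
    obtain ⟨i, hi⟩ := hunit
    exact ⟨_, i, hv.update hi, Function.update_self ..⟩

theorem CVec.tpow_smul (h : CVec w M c) (k : ℤ) : CVec ((tpow k : F⸨X⸩) • w) M (c - k) := by
  constructor
  · simpa [tpow_smul_tpow_smul] using h.1
  · intro l hl
    rw [Set.mem_ofPred_eq, tpow_smul_tpow_smul] at hl
    exact sub_le_iff_le_add.mpr (h.2 hl)

theorem isGen_iff_of_le_of_le (hL : IsFullLattice L) (hLN : L ≤ N)
    (hNL : N ≤ (tpow (-1) : F⸨X⸩) • L) :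
    IsGen N w ↔ (IsGen L w ∧ (tpow (-1) : F⸨X⸩) • w ∉ N) ∨
      (IsGen L ((tpow 1 : F⸨X⸩) • w) ∧ w ∈ N) := by
  have hN : IsFullLattice N := hL.of_le_of_le (hL.tpow_smul (-1)) hLN hNL
  have tpow_one_smul_mem {x : Fin n → F⸨X⸩} (hx : x ∈ N) : (tpow 1 : F⸨X⸩) • x ∈ L := by
    simpa only [neg_neg] using mem_tpow_smul_iff.mp (hNL hx)
  have mem_of_inv_mem (h : (tpow (-1) : F⸨X⸩) • w ∈ N) : w ∈ L := by
    simpa [tpow_smul_tpow_smul, tpow_zero] using tpow_one_smul_mem h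
  have inv_smul : (tpow (-1) : F⸨X⸩) • (tpow 1 : F⸨X⸩) • w = w := by
    rw [tpow_smul_tpow_smul, neg_add_cancel, tpow_zero, one_smul]
  rw [isGen_iff hN, isGen_iff hL, isGen_iff hL, inv_smul]
  constructor
  · rintro ⟨hw, hwN⟩
    by_cases hwL : w ∈ L
    · exact .inl ⟨⟨hwL, fun h ↦ hwN (hLN h)⟩, hwN⟩
    · exact .inr ⟨⟨tpow_one_smul_mem hw, hwL⟩, hw⟩
  · rintro (⟨⟨hwL, -⟩, hwN⟩ | ⟨⟨-, hwL⟩, hw⟩)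
    · exact ⟨hLN hwL, hwN⟩
    · exact ⟨hw, fun h ↦ hwL (mem_of_inv_mem h)⟩

theorem CLat.add_one_of_forall_tight_mem (hL : IsFullLattice L) (hc : CLat L M c) (hLN : L ≤ N)
    (hNL : N ≤ (tpow (-1) : F⸨X⸩) • L)
    (htight : ∀ w, IsGen L w → CVec w M c → (tpow (-1) : F⸨X⸩) • w ∈ N) : CLat N M (c + 1) := by
  constructor
  · obtain ⟨w, hw, hwc⟩ := hc.1
    refine ⟨(tpow (-1) : F⸨X⸩) • w, (isGen_iff_of_le_of_le hL hLN hNL).mpr (.inr ⟨?_, ?_⟩), ?_⟩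
    · simpa [tpow_smul_tpow_smul, tpow_zero] using hw
    · exact htight w hw hwc
    · simpa only [sub_neg_eq_add] using hwc.tpow_smul (-1)
  · rintro μ ⟨w, hw, hwμ⟩
    obtain ⟨hgen, hmem⟩ | ⟨hgen, -⟩ := (isGen_iff_of_le_of_le hL hLN hNL).mp hw
    · have hne : c ≠ μ := by
        rintro rfl
        exact hmem (htight w hgen hwμ)
      exact lt_of_le_of_ne (hc.2 ⟨w, hgen, hwμ⟩) hne
    · exact le_sub_iff_add_le.mp (hc.2 ⟨_, hgen, hwμ.tpow_smul 1⟩)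

theorem CLat.of_exists_tight_notMem (hL : IsFullLattice L) (hc : CLat L M c) (hLN : L ≤ N)
    (hNL : N ≤ (tpow (-1) : F⸨X⸩) • L)
    (htight : ∃ w, IsGen L w ∧ CVec w M c ∧ (tpow (-1) : F⸨X⸩) • w ∉ N) : CLat N M c := by
  constructor
  · obtain ⟨w, hw, hwc, hwN⟩ := htight
    exact ⟨w, (isGen_iff_of_le_of_le hL hLN hNL).mpr (.inl ⟨hw, hwN⟩), hwc⟩
  · rintro μ ⟨w, hw, hwμ⟩
    obtain ⟨hgen, -⟩ | ⟨hgen, -⟩ := (isGen_iff_of_le_of_le hL hLN hNL).mp hw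
    · exact hc.2 ⟨w, hgen, hwμ⟩
    · exact (hc.2 ⟨_, hgen, hwμ.tpow_smul 1⟩).trans (sub_le_self μ zero_le_one)

theorem mem_span_range_sup_X_smul_iff_memTL {ι : Type*} [Fintype ι] {u : ι → Fin n → F⸨X⸩}
    (hu : ∀ i, u i ∈ L) :
    w ∈ Submodule.span F⟦X⟧ (Set.range u) ⊔ (X : F⟦X⟧) • L ↔
      ∃ a : ι → F, MemTL L (w - ∑ i, algebraMap F F⸨X⸩ (a i) • u i) := by
  have hC (a : F) : algebraMap F F⸨X⸩ a = algebraMap F⟦X⟧ F⸨X⸩ (C a) := by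
    rw [HahnSeries.algebraMap_apply', PowerSeries.algebraMap_apply, HahnSeries.ofPowerSeries_C,
      LaurentSeries.coe_algebraMap, HahnSeries.ofPowerSeries_C, Algebra.algebraMap_self,
      RingHom.id_apply]
  simp only [mem_span_range_sup_X_smul_iff hu, memTL_iff, hC, algebraMap_smul]

theorem cLat_tInvW_add_general (hL : IsFullLattice L) (hc : CLat L M c)
    {W : Submodule F⟦X⟧ (Fin n → F⸨X⸩)} (hW : W ≤ L) :
    ((∀ w, IsGen L w → CVec w M c → w ∈ W ⊔ (X : F⟦X⟧) • L) →
      CLat ((tpow (-1) : F⸨X⸩) • W ⊔ L) M (c + 1)) ∧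
    ((∃ w, IsGen L w ∧ CVec w M c ∧ w ∉ W ⊔ (X : F⟦X⟧) • L) →
      CLat ((tpow (-1) : F⸨X⸩) • W ⊔ L) M c) := by
  have hle : L ≤ (tpow (-1) : F⸨X⸩) • L := fun x hx ↦ mem_tpow_smul_iff.mpr <| by
    rw [neg_neg, ← algebraMap_X_eq_tpow_one, algebraMap_smul]
    exact L.smul_mem X hx
  have hsup : (tpow (-1) : F⸨X⸩) • W ⊔ L ≤ (tpow (-1) : F⸨X⸩) • L :=
    sup_le (smul_mono_right _ hW) hle
  simp only [mem_sup_X_smul_iff]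
  exact ⟨hc.add_one_of_forall_tight_mem hL le_sup_right hsup,
    hc.of_exists_tight_notMem hL le_sup_right hsup⟩

end Lattice

/-- Key step of the linearized Kuhn–Munkres algorithm.  Let `L, M` be full-rank lattices,
`c(L,M) = cLM`, and let `W ⊆ L` be the `O`-submodule generated by `u_1, ..., u_d ∈ L`
whose images in `L/tL` are linearly independent over `F`, lifting the subspace
`W̃ ⊆ L/tL` they span.  Set `L' = t⁻¹W + L`.  If every tight generator of `L` with
respect to `M` has image in `W̃`, then `c(L',M) = c(L,M) + 1`; if some tight generator
has image outside `W̃`, then `c(L',M) = c(L,M)`. -/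
theorem cLat_tInvW_add {F : Type*} [Field F] {n d : ℕ}
    (L M : Submodule (PowerSeries F) (Fin n → LaurentSeries F))
    (hL : IsFullLattice L) (hM : IsFullLattice M)
    (cLM : ℤ) (hcLM : CLat L M cLM)
    (u : Fin d → Fin n → LaurentSeries F) (hu : ∀ i, u i ∈ L)
    (hindep : ∀ a : Fin d → F,
      MemTL L (∑ i, algebraMap F (LaurentSeries F) (a i) • u i) → a = 0) :
    -- `L' = t⁻¹ W + L`
    letI L' : Submodule (PowerSeries F) (Fin n → LaurentSeries F) :=
      Submodule.span (PowerSeries F)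
          (Set.range fun i => (tpow (-1) : LaurentSeries F) • u i) ⊔ L
    -- `w` has image in `W̃` iff `w ≡ ∑ a i • u i mod tL` for some coefficients `a`
    letI imageInW : (Fin n → LaurentSeries F) → Prop := fun w =>
      ∃ a : Fin d → F, MemTL L (w - ∑ i, algebraMap F (LaurentSeries F) (a i) • u i)
    ((∀ w, IsGen L w → CVec w M cLM → imageInW w) → CLat L' M (cLM + 1)) ∧
    ((∃ w, IsGen L w ∧ CVec w M cLM ∧ ¬ imageInW w) → CLat L' M cLM) := by
  simpa only [smul_span_range, mem_span_range_sup_X_smul_iff_memTL hu] using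
    cLat_tInvW_add_general hL hcLM (Submodule.span_le.mpr (Set.range_subset_iff.mpr hu))
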